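/- Let T ∈ (0,∞] and let λ : [0,T) → ℝ be a C² function with λ(0) = 0 satisfying the self-similarity equation, and assume λ′(0) ≠ 0 and λ″(0) ≠ 0. Then for every t ∈ [0,T), λ′(t) ≠ 0, λ″(t) ≠ 0, and λ′(t)³/λ″(t) = λ′(0)³/λ″(0). -/

import Mathlib

/-!
Differentiating `l s = r * (l (t + s / r²) - l t)` in `s` gives `l' s = r⁻¹ * l' (t + s / r²)`,
and once more `l'' s = r⁻³ * l'' (t + s / r²)`. At `s = 0` this reads `l' t = r * l' 0` and
`l'' t = r³ * l'' 0`, so the factor `r³` cancels in `l'³ / l''`. Both differentiations are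
instances of `derivWithin_of_affine_relation`.
-/

/-- The domain `[0,T)` of a driving function, for `T ∈ (0,∞]`. -/
def drivingDomain (T : EReal) : Set ℝ := {t : ℝ | 0 ≤ t ∧ (t : EReal) < T}

/-- A driving function `l : [0,T) → ℝ` (with `l 0 = 0`) satisfies the self-similarity
equation if for every `t ∈ [0,T)` there is `r > 0` with
`r * (l (t + s / r²) - l t) = l s` for all `s ∈ [0, r² (T - t))`. -/
def SelfSimilarDriving (T : EReal) (l : ℝ → ℝ) : Prop :=
  ∀ t : ℝ, 0 ≤ t → (t : EReal) < T →
    ∃ r : ℝ, 0 < r ∧ ∀ s : ℝ, 0 ≤ s → ((t + s / r ^ 2 : ℝ) : EReal) < T →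
      r * (l (t + s / r ^ 2) - l t) = l s

lemma isOpen_lt_EReal (T : EReal) : IsOpen {x : ℝ | (x : EReal) < T} :=
  isOpen_Iio.preimage continuous_coe_real_ereal

lemma uniqueDiffOn_drivingDomain (T : EReal) : UniqueDiffOn ℝ (drivingDomain T) :=
  (uniqueDiffOn_Ici (0 : ℝ)).inter (isOpen_lt_EReal T)

/-- A relation `f s = a * f (t + s / c) + b`, valid for all `s` such that both `s` and `t + s / c`
lie in `[0,T)`, passes to the derivative on the same set of `s`, so it can be differentiated
repeatedly. -/
lemma derivWithin_of_affine_relation {T : EReal} {f : ℝ → ℝ} {t a b c : ℝ}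
    (hf : DifferentiableOn ℝ f (drivingDomain T)) (ht : 0 ≤ t) (hc : 0 < c)
    (h : ∀ s : ℝ, s ∈ drivingDomain T → ((t + s / c : ℝ) : EReal) < T →
      f s = a * f (t + s / c) + b)
    (s : ℝ) (hs : s ∈ drivingDomain T) (hst : ((t + s / c : ℝ) : EReal) < T) :
    derivWithin f (drivingDomain T) s
      = a / c * derivWithin f (drivingDomain T) (t + s / c) := by
  set S : Set ℝ := drivingDomain T ∩ {x : ℝ | ((t + x / c : ℝ) : EReal) < T} with hS
  have hmem : s ∈ S := ⟨hs, hst⟩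
  have hopen : IsOpen {x : ℝ | ((t + x / c : ℝ) : EReal) < T} :=
    (isOpen_lt_EReal T).preimage (f := fun x : ℝ => t + x / c) (by fun_prop)
  have huniq : UniqueDiffWithinAt ℝ S s := (uniqueDiffOn_drivingDomain T).inter hopen s hmem
  have hmaps : Set.MapsTo (fun x : ℝ => t + x / c) S (drivingDomain T) := fun x hx =>
    ⟨add_nonneg ht (div_nonneg hx.1.1 hc.le), hx.2⟩
  have hleft : HasDerivWithinAt f (derivWithin f (drivingDomain T) s) S s :=
    (hf s hs).hasDerivWithinAt.mono Set.inter_subset_left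
  have hinner : HasDerivWithinAt (fun x : ℝ => t + x / c) (1 / c) S s :=
    ((hasDerivWithinAt_id s S).div_const c).const_add t
  have hcomp : HasDerivWithinAt (fun x => f (t + x / c))
      (derivWithin f (drivingDomain T) (t + s / c) * (1 / c)) S s :=
    (hf _ (hmaps hmem)).hasDerivWithinAt.comp s hinner hmaps
  have hright : HasDerivWithinAt f
      (a * (derivWithin f (drivingDomain T) (t + s / c) * (1 / c))) S s :=
    ((hcomp.const_mul a).add_const b).congr (fun x hx => h x hx.1 hx.2) (h s hs hst)
  rw [huniq.eq_deriv S hleft hright]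
  ring

/-- Equation (3.5) in the proof of Theorem 3.2: if `λ` is `C²` on `[0,T)`, `λ(0) = 0`,
`λ` satisfies the self-similarity equation, and `λ'(0) ≠ 0`, `λ''(0) ≠ 0`, then
`λ'(t) ≠ 0`, `λ''(t) ≠ 0`, and the Loewner curvature `λ'(t)³/λ''(t)` is constant. -/
theorem selfSimilar_constant_curvature
    (T : EReal) (hT : 0 < T) (l : ℝ → ℝ)
    (hC2 : ContDiffOn ℝ 2 l (drivingDomain T))
    (h0 : l 0 = 0)
    (hss : SelfSimilarDriving T l)
    (h'0 : derivWithin l (drivingDomain T) 0 ≠ 0)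
    (h''0 : derivWithin (derivWithin l (drivingDomain T)) (drivingDomain T) 0 ≠ 0) :
    ∀ t : ℝ, 0 ≤ t → (t : EReal) < T →
      derivWithin l (drivingDomain T) t ≠ 0 ∧
      derivWithin (derivWithin l (drivingDomain T)) (drivingDomain T) t ≠ 0 ∧
      (derivWithin l (drivingDomain T) t) ^ 3
          / derivWithin (derivWithin l (drivingDomain T)) (drivingDomain T) t
        = (derivWithin l (drivingDomain T) 0) ^ 3
          / derivWithin (derivWithin l (drivingDomain T)) (drivingDomain T) 0 := by
  intro t ht htT
  obtain ⟨r, hr, hrel⟩ := hss t ht htT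
  have hr2 : 0 < r ^ 2 := by positivity
  have huniq := uniqueDiffOn_drivingDomain T
  have hd1 : DifferentiableOn ℝ l (drivingDomain T) := hC2.differentiableOn (by norm_num)
  have hd2 : DifferentiableOn ℝ (derivWithin l (drivingDomain T)) (drivingDomain T) :=
    (hC2.derivWithin (m := 1) huniq (by norm_num)).differentiableOn (by norm_num)
  have e1 := derivWithin_of_affine_relation (a := r) (b := -(r * l t)) hd1 ht hr2
    (fun s hs hst => by rw [← hrel s hs.1 hst]; ring)
  have e2 := derivWithin_of_affine_relation (a := r / r ^ 2) (b := 0) hd2 ht hr2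
    (fun s hs hst => by rw [e1 s hs hst, add_zero])
  have hmem0 : (0 : ℝ) ∈ drivingDomain T := ⟨le_rfl, by simpa using hT⟩
  have hT0 : ((t + 0 / r ^ 2 : ℝ) : EReal) < T := by simpa using htT
  have k1 := e1 0 hmem0 hT0
  have k2 := e2 0 hmem0 hT0
  rw [zero_div, add_zero] at k1 k2
  have hne1 : derivWithin l (drivingDomain T) t ≠ 0 := fun h => h'0 (by rw [k1, h, mul_zero])
  have hne2 : derivWithin (derivWithin l (drivingDomain T)) (drivingDomain T) t ≠ 0 :=
    fun h => h''0 (by rw [k2, h, mul_zero])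
  refine ⟨hne1, hne2, ?_⟩
  rw [k1, k2]
  field_simp
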